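/- Let γ = 1 − 2π⁻². Then for every α > γ^{−γ}(1−γ)^{γ−1} one has I₀(α) ≥ (1−γ)^{−1}; that is, the function I₀ cannot take values smaller than (1−γ)^{−1}. -/

import Mathlib

open MeasureTheory Set Real

noncomputable section

/-- `f_α(t) = α t^{2γ} − t² − 1`. -/
def fA (γ α t : ℝ) : ℝ := α * t ^ (2 * γ) - t ^ 2 - 1

/-- The derivative `f_α'(t) = 2αγ t^{2γ−1} − 2t`. -/
def fA' (γ α t : ℝ) : ℝ := 2 * α * γ * t ^ (2 * γ - 1) - 2 * t

/-- The second derivative `f_α''(t) = 2αγ(2γ−1) t^{2γ−2} − 2`. -/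
def fA'' (γ α t : ℝ) : ℝ := 2 * α * γ * (2 * γ - 1) * t ^ (2 * γ - 2) - 2

/-- `ψ_α := (f_α')² − 2 f_α f_α''`. -/
def psiA (γ α t : ℝ) : ℝ := (fA' γ α t) ^ 2 - 2 * fA γ α t * fA'' γ α t

/-- The left endpoint `ω⁻_α` of the positivity interval of `f_α`. -/
def omegaMinus (γ α : ℝ) : ℝ := sInf {t : ℝ | 0 < t ∧ 0 < fA γ α t}

/-- The right endpoint `ω⁺_α` of the positivity interval of `f_α`. -/
def omegaPlus (γ α : ℝ) : ℝ := sSup {t : ℝ | 0 < t ∧ 0 < fA γ α t}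

/-- `I₀(α) := ∫_{ω⁻_α}^{ω⁺_α} dt / √(f_α(t))`. -/
def I0 (γ α : ℝ) : ℝ :=
  ∫ t in omegaMinus γ α..omegaPlus γ α, 1 / Real.sqrt (fA γ α t)

/-!
Let `m` be the maximum point of `f_α` and `M = f_α(m)`. The parabola `M - 2(1-γ)(t-m)²` osculates
`f_α` at `m`, and for it the integral is exactly `π / √(2(1-γ))`: the function `1 / √f` is then
`±` the derivative of `A arcsin √(f/M)`, where `A = 1 / √(2(1-γ))`. For `f_α` itself, `1 / √f`
still dominates the derivative of `± A arcsin √(f/M) + k √f`, with the sign `+` before `m` and `-`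
after `m` but the same `k` on both sides, so that the two contributions of `k √f`, which absorbs the
asymmetry of `f_α` about `m`, cancel. After rescaling `t = m w`, the pointwise inequality behind
this no longer involves `α`.
-/

section UnimodalIntegral

variable {f f' : ℝ → ℝ} {p m q A k : ℝ}

theorem strictMonoOn_Icc_of_hasDerivAt_pos (hf : ∀ t ∈ Icc p m, HasDerivAt f (f' t) t)
    (hpos : ∀ t ∈ Ioo p m, 0 < f' t) : StrictMonoOn f (Icc p m) := by
  apply strictMonoOn_of_hasDerivWithinAt_pos (f' := f') (convex_Icc p m)
    (HasDerivAt.continuousOn hf) <;> rw [interior_Icc]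
  · exact fun t ht => (hf t (Ioo_subset_Icc_self ht)).hasDerivWithinAt
  · exact hpos

theorem pos_of_hasDerivAt_pos (hf : ∀ t ∈ Icc p m, HasDerivAt f (f' t) t)
    (hpos : ∀ t ∈ Ioo p m, 0 < f' t) (hp : 0 ≤ f p) {t : ℝ} (ht : t ∈ Ioc p m) : 0 < f t :=
  hp.trans_lt (strictMonoOn_Icc_of_hasDerivAt_pos hf hpos
    (left_mem_Icc.2 (ht.1.le.trans ht.2)) (Ioc_subset_Icc_self ht) ht.1)

theorem intervalIntegrable_one_div_sqrt_of_deriv_pos_Icc (hpm : p ≤ m)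
    (hf : ∀ t ∈ Icc p m, HasDerivAt f (f' t) t) (hf' : ContinuousOn f' (Icc p m))
    (hp : 0 ≤ f p) (hpos : ∀ t ∈ Icc p m, 0 < f' t) :
    IntervalIntegrable (fun t => 1 / √(f t)) volume p m := by
  have hfpos : ∀ t ∈ Ioc p m, 0 < f t := fun t =>
    pos_of_hasDerivAt_pos hf (fun t ht => hpos t (Ioo_subset_Icc_self ht)) hp
  -- `1 / √f` is the integrable derivative of `√f` times the continuous function `2 / f'`.
  have hsqrt : IntervalIntegrable (fun t => f' t / (2 * √(f t))) volume p m := by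
    apply intervalIntegral.intervalIntegrable_deriv_of_nonneg (g := fun t => √(f t))
    · rw [uIcc_of_le hpm]
      exact (HasDerivAt.continuousOn hf).sqrt
    · rw [min_eq_left hpm, max_eq_right hpm]
      exact fun t ht => (hf t (Ioo_subset_Icc_self ht)).sqrt (hfpos t (Ioo_subset_Ioc_self ht)).ne'
    · rw [min_eq_left hpm, max_eq_right hpm]
      exact fun t ht => div_nonneg (hpos t (Ioo_subset_Icc_self ht)).le (by positivity)
  have hquot : ContinuousOn (fun t => 2 / f' t) (uIcc p m) := by
    rw [uIcc_of_le hpm]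
    exact continuousOn_const.div hf' fun t ht => (hpos t ht).ne'
  refine (hsqrt.mul_continuousOn hquot).congr fun t ht => ?_
  rw [uIoc_of_le hpm] at ht
  have hf't : 0 < f' t := hpos t (Ioc_subset_Icc_self ht)
  have hsqrt_pos : 0 < √(f t) := Real.sqrt_pos.2 (hfpos t ht)
  field_simp

theorem intervalIntegrable_one_div_sqrt_of_deriv_pos_Ico (hpm : p < m)
    (hf : ∀ t ∈ Icc p m, HasDerivAt f (f' t) t) (hf' : ContinuousOn f' (Icc p m))
    (hp : 0 ≤ f p) (hpos : ∀ t ∈ Ico p m, 0 < f' t) :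
    IntervalIntegrable (fun t => 1 / √(f t)) volume p m := by
  obtain ⟨a, hpa, ham⟩ := exists_between hpm
  have hleft : Icc p a ⊆ Icc p m := Icc_subset_Icc_right ham.le
  have hright : Icc a m ⊆ Icc p m := Icc_subset_Icc_left hpa.le
  have hint_left : IntervalIntegrable (fun t => 1 / √(f t)) volume p a :=
    intervalIntegrable_one_div_sqrt_of_deriv_pos_Icc hpa.le (fun t ht => hf t (hleft ht))
      (hf'.mono hleft) hp fun t ht => hpos t ⟨ht.1, ht.2.trans_lt ham⟩
  have hfpos : ∀ t ∈ Icc a m, 0 < f t := fun t ht =>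
    pos_of_hasDerivAt_pos hf (fun t ht => hpos t (Ioo_subset_Ico_self ht)) hp
      ⟨hpa.trans_le ht.1, ht.2⟩
  refine hint_left.trans (ContinuousOn.intervalIntegrable ?_)
  rw [uIcc_of_le ham.le]
  exact continuousOn_const.div ((HasDerivAt.continuousOn hf).mono hright).sqrt
    fun t ht => (Real.sqrt_pos.2 (hfpos t ht)).ne'

theorem hasDerivAt_arcsin_sqrt_div {d M t : ℝ} (hf : HasDerivAt f d t) (ht : 0 < f t)
    (htM : f t < M) :
    HasDerivAt (fun s => arcsin √(f s / M)) (d / (2 * √(f t) * √(M - f t))) t := by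
  have hM : 0 < M := ht.trans htM
  have hlt : √(f t / M) < 1 := by
    rw [Real.sqrt_lt' one_pos, one_pow]
    exact (div_lt_one hM).2 htM
  have hne : √(f t / M) ≠ -1 := (neg_one_lt_zero.trans_le (Real.sqrt_nonneg _)).ne'
  refine ((hasDerivAt_arcsin hne hlt.ne).comp t
    ((hf.div_const M).sqrt (div_pos ht hM).ne')).congr_deriv ?_
  have hcompl : 1 - f t / M = (M - f t) / M := by field_simp
  have hsqM : √M ^ 2 = M := Real.sq_sqrt hM.le
  have hpos_sub : 0 < √(M - f t) := Real.sqrt_pos.2 (sub_pos.2 htM)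
  rw [Real.sq_sqrt (div_pos ht hM).le, hcompl, Real.sqrt_div' _ hM.le, Real.sqrt_div' _ hM.le]
  field_simp
  rw [hsqM]

theorem integral_one_div_sqrt_ge_of_deriv_pos (hpm : p < m)
    (hf : ∀ t ∈ Icc p m, HasDerivAt f (f' t) t) (hf' : ContinuousOn f' (Icc p m))
    (hp : f p = 0) (hpos : ∀ t ∈ Ico p m, 0 < f' t)
    (hA : ∀ t ∈ Ioo p m, A * f' t ≤ (2 - k * f' t) * √(f m - f t)) :
    IntervalIntegrable (fun t => 1 / √(f t)) volume p m ∧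
      A * (π / 2) + k * √(f m) ≤ ∫ t in p..m, 1 / √(f t) := by
  have hfc : ContinuousOn f (Icc p m) := HasDerivAt.continuousOn hf
  have hpos' : ∀ t ∈ Ioo p m, 0 < f' t := fun t ht => hpos t (Ioo_subset_Ico_self ht)
  have hfpos : ∀ t ∈ Ioc p m, 0 < f t := fun t => pos_of_hasDerivAt_pos hf hpos' hp.ge
  have hint := intervalIntegrable_one_div_sqrt_of_deriv_pos_Ico hpm hf hf' hp.ge hpos
  refine ⟨hint, ?_⟩
  have hbound := intervalIntegral.sub_le_integral_of_hasDeriv_right_of_le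
    (g := fun t => A * arcsin √(f t / f m) + k * √(f t))
    (g' := fun t => A * (f' t / (2 * √(f t) * √(f m - f t))) + k * (f' t / (2 * √(f t))))
    (φ := fun t => 1 / √(f t)) hpm.le
    ((continuousOn_const.mul (continuous_arcsin.comp_continuousOn (hfc.div_const _).sqrt)).add
      (continuousOn_const.mul hfc.sqrt))
    (fun t ht => ?_) ((intervalIntegrable_iff_integrableOn_Icc_of_le hpm.le).1 hint)
    (fun t ht => ?_)
  · simpa [hp, (hfpos m ⟨hpm, le_rfl⟩).ne'] using hbound
  all_goals
    have hft : 0 < f t := hfpos t (Ioo_subset_Ioc_self ht)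
    have hlt : f t < f m := strictMonoOn_Icc_of_hasDerivAt_pos hf hpos'
      (Ioo_subset_Icc_self ht) (right_mem_Icc.2 hpm.le) ht.2
    have hft' := hf t (Ioo_subset_Icc_self ht)
  · exact (((hasDerivAt_arcsin_sqrt_div hft' hft hlt).const_mul A).add
      ((hft'.sqrt hft.ne').const_mul k)).hasDerivWithinAt
  · have hsqrt_sub : 0 < √(f m - f t) := Real.sqrt_pos.2 (sub_pos.2 hlt)
    calc A * (f' t / (2 * √(f t) * √(f m - f t))) + k * (f' t / (2 * √(f t)))
        = (A * f' t + k * f' t * √(f m - f t)) / (2 * √(f t) * √(f m - f t)) := by field_simp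
      _ ≤ 2 * √(f m - f t) / (2 * √(f t) * √(f m - f t)) := by
          gcongr
          linarith [hA t ht]
      _ = 1 / √(f t) := by field_simp

theorem integral_one_div_sqrt_ge_of_deriv_neg (hmq : m < q)
    (hf : ∀ t ∈ Icc m q, HasDerivAt f (f' t) t) (hf' : ContinuousOn f' (Icc m q))
    (hq : f q = 0) (hneg : ∀ t ∈ Ioc m q, f' t < 0)
    (hA : ∀ t ∈ Ioo m q, A * -f' t ≤ (2 - k * f' t) * √(f m - f t)) :
    IntervalIntegrable (fun t => 1 / √(f t)) volume m q ∧
      A * (π / 2) - k * √(f m) ≤ ∫ t in m..q, 1 / √(f t) := by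
  have hIcc : ∀ t ∈ Icc (-q) (-m), -t ∈ Icc m q := fun t ht => neg_mem_Icc_iff.2 ht
  have hreflected := integral_one_div_sqrt_ge_of_deriv_pos (f := fun t => f (-t))
    (f' := fun t => -f' (-t)) (A := A) (k := -k) (neg_lt_neg hmq)
    (fun t ht => by
      simpa [Function.comp_def] using (hf (-t) (hIcc t ht)).comp t (hasDerivAt_neg t))
    ((hf'.comp continuousOn_neg hIcc).neg) (by simpa using hq)
    (fun t ht => neg_pos.2 (hneg (-t) ⟨lt_neg.1 ht.2, neg_le.1 ht.1⟩))
    (fun t ht => by simpa using hA (-t) ⟨lt_neg.1 ht.2, neg_lt.1 ht.1⟩)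
  rw [intervalIntegral.integral_comp_neg (fun t => 1 / √(f t))] at hreflected
  simp only [neg_neg, neg_mul, ← sub_eq_add_neg] at hreflected
  refine ⟨?_, hreflected.2⟩
  rw [IntervalIntegrable.iff_comp_neg]
  exact hreflected.1.symm

theorem mul_pi_le_integral_one_div_sqrt (hpm : p < m) (hmq : m < q)
    (hf : ∀ t ∈ Icc p q, HasDerivAt f (f' t) t) (hf' : ContinuousOn f' (Icc p q))
    (hp : f p = 0) (hq : f q = 0)
    (hpos : ∀ t ∈ Ico p m, 0 < f' t) (hneg : ∀ t ∈ Ioc m q, f' t < 0)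
    (hA : ∀ t ∈ Ioo p q, A * |f' t| ≤ (2 - k * f' t) * √(f m - f t)) :
    A * π ≤ ∫ t in p..q, 1 / √(f t) := by
  have hleft : Icc p m ⊆ Icc p q := Icc_subset_Icc_right hmq.le
  have hright : Icc m q ⊆ Icc p q := Icc_subset_Icc_left hpm.le
  obtain ⟨hint_left, hbound_left⟩ := integral_one_div_sqrt_ge_of_deriv_pos (A := A) (k := k) hpm
    (fun t ht => hf t (hleft ht)) (hf'.mono hleft) hp hpos fun t ht => by
      simpa only [abs_of_pos (hpos t (Ioo_subset_Ico_self ht))] using hA t ⟨ht.1, ht.2.trans hmq⟩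
  obtain ⟨hint_right, hbound_right⟩ := integral_one_div_sqrt_ge_of_deriv_neg (A := A) (k := k) hmq
    (fun t ht => hf t (hright ht)) (hf'.mono hright) hq hneg fun t ht => by
      simpa only [abs_of_neg (hneg t (Ioo_subset_Ioc_self ht))] using hA t ⟨hpm.trans ht.1, ht.2⟩
  rw [← intervalIntegral.integral_add_adjacent_intervals hint_left hint_right]
  linarith

end UnimodalIntegral

theorem exists_setOf_lt_eq_Ioo_of_unimodal {X Y : Type*} [ConditionallyCompleteLinearOrder X]
    [TopologicalSpace X] [OrderTopology X] [DenselyOrdered X] [LinearOrder Y] [TopologicalSpace Y]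
    [OrderClosedTopology Y] {f : X → Y} {a m b : X} {c : Y} (hf : ContinuousOn f (Icc a b))
    (hmono : StrictMonoOn f (Icc a m)) (hanti : StrictAntiOn f (Ici m)) (ham : a ≤ m) (hmb : m ≤ b)
    (ha : f a < c) (hm : c < f m) (hb : f b < c) :
    ∃ p ∈ Ioo a m, ∃ q ∈ Ioo m b, f p = c ∧ f q = c ∧ {t | a < t ∧ c < f t} = Ioo p q := by
  obtain ⟨p, hp, rfl⟩ :=
    intermediate_value_Ioo ham (hf.mono (Icc_subset_Icc_right hmb)) ⟨ha, hm⟩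
  obtain ⟨q, hq, hqp⟩ :=
    intermediate_value_Ioo' hmb (hf.mono (Icc_subset_Icc_left ham)) ⟨hb, hm⟩
  refine ⟨p, hp, q, hq, rfl, hqp, Set.ext fun t => ?_⟩
  rcases le_total t m with htm | hmt
  · have hiff : a < t → (f p < f t ↔ p < t) := fun hat =>
      hmono.lt_iff_lt (Ioo_subset_Icc_self hp) ⟨hat.le, htm⟩
    exact ⟨fun ⟨hat, hlt⟩ => ⟨(hiff hat).1 hlt, htm.trans_lt hq.1⟩,
      fun ⟨hpt, _⟩ => ⟨hp.1.trans hpt, (hiff (hp.1.trans hpt)).2 hpt⟩⟩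
  · have hiff : f p < f t ↔ t < q := hqp ▸ hanti.lt_iff_gt hq.1.le hmt
    exact ⟨fun ⟨_, hlt⟩ => ⟨hp.2.trans_le hmt, hiff.1 hlt⟩,
      fun ⟨_, htq⟩ => ⟨hp.1.trans (hp.2.trans_le hmt), hiff.2 htq⟩⟩

section NormalizedWell

/-- The normalized potential well `V`: if `f_α` is maximal at `m`, then
`f_α(m w) = f_α(m) - m² V(w)`, see `fA_peakPoint_mul`. -/
def wellPotential (γ w : ℝ) : ℝ := w ^ 2 - w ^ (2 * γ) / γ + (1 - γ) / γ

/-- Half the derivative of `wellPotential`. -/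
def wellForce (γ w : ℝ) : ℝ := w - w ^ (2 * γ - 1)

/-- The factor `B` in the comparison of the force `F` with the potential `V`. The coefficient
`(2γ-1) / (6(1-γ))` is the one for which `2(1-γ) V - (F / B)²` has no cubic term at its double zero
`w = 1`; with any other coefficient this difference changes sign there. -/
def wellCorrection (γ w : ℝ) : ℝ := 1 + (2 * γ - 1) / (6 * (1 - γ)) * wellForce γ w

variable {γ w : ℝ}

theorem wellForce_eq_mul (hw : 0 < w) : wellForce γ w = w * (1 - w ^ (2 * γ - 2)) := by
  rw [wellForce, show 2 * γ - 1 = 2 * γ - 2 + 1 by ring, Real.rpow_add_one hw.ne']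
  ring

theorem wellForce_neg (hγ : γ < 1) (hw : 0 < w) (hw1 : w < 1) : wellForce γ w < 0 := by
  rw [wellForce_eq_mul hw]
  exact mul_neg_of_pos_of_neg hw
    (sub_neg.2 (Real.one_lt_rpow_of_pos_of_lt_one_of_neg hw hw1 (by linarith)))

theorem wellForce_pos (hγ : γ < 1) (hw1 : 1 < w) : 0 < wellForce γ w := by
  rw [wellForce_eq_mul (one_pos.trans hw1)]
  exact mul_pos (one_pos.trans hw1)
    (sub_pos.2 (Real.rpow_lt_one_of_one_lt_of_neg hw1 (by linarith)))

theorem neg_two_mul_one_sub_le_wellForce (hγ : 1 / 2 ≤ γ) (hγ1 : γ < 1) (hw : 0 < w) :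
    -(2 * (1 - γ)) ≤ wellForce γ w := by
  have hbernoulli : w ^ (2 * γ - 1) ≤ 1 + (2 * γ - 1) * (w - 1) := by
    simpa using rpow_one_add_le_one_add_mul_self (s := w - 1) (by linarith)
      (p := 2 * γ - 1) (by linarith) (by linarith)
  have hnonneg : 0 ≤ w * (1 - γ) := mul_nonneg hw.le (by linarith)
  rw [wellForce]
  linarith

theorem wellCorrection_pos (hγ : 1 / 2 ≤ γ) (hγ1 : γ < 1) (hw : 0 < w) :
    0 < wellCorrection γ w := by
  have hδ : 0 < 1 - γ := sub_pos.2 hγ1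
  have hcoeff : 0 ≤ (2 * γ - 1) / (6 * (1 - γ)) := div_nonneg (by linarith) (by linarith)
  calc 0 < 1 + (2 * γ - 1) / (6 * (1 - γ)) * -(2 * (1 - γ)) := by
        field_simp
        linarith
    _ ≤ wellCorrection γ w := by
        rw [wellCorrection]
        gcongr
        exact neg_two_mul_one_sub_le_wellForce hγ hγ1 hw

theorem hasDerivAt_wellPotential (hγ : γ ≠ 0) (hw : 0 < w) :
    HasDerivAt (wellPotential γ) (2 * wellForce γ w) w := by
  refine (((hasDerivAt_pow 2 w).sub ((Real.hasDerivAt_rpow_const (p := 2 * γ)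
    (Or.inl hw.ne')).div_const γ)).add_const ((1 - γ) / γ)).congr_deriv ?_
  simp only [wellForce, Nat.cast_ofNat, Nat.add_one_sub_one, pow_one]
  field_simp

theorem hasDerivAt_wellForce (hw : 0 < w) :
    HasDerivAt (wellForce γ) (1 - (2 * γ - 1) * w ^ (2 * γ - 2)) w := by
  refine ((hasDerivAt_id w).sub
    (Real.hasDerivAt_rpow_const (p := 2 * γ - 1) (Or.inl hw.ne'))).congr_deriv ?_
  rw [show 2 * γ - 1 - 1 = 2 * γ - 2 by ring]

theorem hasDerivAt_wellForce_div_wellCorrection (hw : 0 < w) (hB : wellCorrection γ w ≠ 0) :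
    HasDerivAt (fun w => wellForce γ w / wellCorrection γ w)
      ((1 - (2 * γ - 1) * w ^ (2 * γ - 2)) / wellCorrection γ w ^ 2) w := by
  have hF : HasDerivAt (wellForce γ) (1 - (2 * γ - 1) * w ^ (2 * γ - 2)) w :=
    hasDerivAt_wellForce hw
  refine (hF.fun_div ((hF.const_mul _).const_add 1) hB).congr_deriv ?_
  rw [wellCorrection]
  ring

theorem deriv_wellForce_le_wellCorrection_pow (hγ : 1 / 2 ≤ γ) (hγ1 : γ < 1) (hw : 0 < w) :
    1 - (2 * γ - 1) * w ^ (2 * γ - 2) ≤ 2 * (1 - γ) * wellCorrection γ w ^ 3 := by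
  have hδ : 0 < 1 - γ := sub_pos.2 hγ1
  have hle : 1 - w ^ (2 * γ - 2) ≤ wellForce γ w := by
    rw [wellForce_eq_mul hw]
    rcases le_total w 1 with hw1 | hw1
    · exact le_mul_of_le_one_left (sub_nonpos.2
        (Real.one_le_rpow_of_pos_of_le_one_of_nonpos hw hw1 (by linarith))) hw1
    · exact le_mul_of_one_le_left (sub_nonneg.2
        (Real.rpow_le_one_of_one_le_of_nonpos hw1 (by linarith))) hw1
  calc 1 - (2 * γ - 1) * w ^ (2 * γ - 2)
      = 2 * (1 - γ) + (2 * γ - 1) * (1 - w ^ (2 * γ - 2)) := by ring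
    _ ≤ 2 * (1 - γ) + (2 * γ - 1) * wellForce γ w := by
        gcongr
        linarith
    _ = 2 * (1 - γ) * (1 + (3 : ℕ) * (wellCorrection γ w - 1)) := by
        rw [wellCorrection]
        field_simp
        push_cast
        ring
    _ ≤ 2 * (1 - γ) * wellCorrection γ w ^ 3 := by
        gcongr
        simpa using one_add_mul_le_pow
          (by linarith [wellCorrection_pos hγ hγ1 hw] : -2 ≤ wellCorrection γ w - 1) 3

theorem sq_wellForce_div_wellCorrection_le (hγ : 1 / 2 ≤ γ) (hγ1 : γ < 1) (hw : 0 < w) :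
    (wellForce γ w / wellCorrection γ w) ^ 2 ≤ 2 * (1 - γ) * wellPotential γ w := by
  have hγ0 : 0 < γ := by linarith
  set R : ℝ → ℝ := fun w => 2 * (1 - γ) * wellPotential γ w -
    (wellForce γ w / wellCorrection γ w) ^ 2
  set e : ℝ → ℝ := fun w => 2 * (2 * (1 - γ) * wellCorrection γ w ^ 3 -
    (1 - (2 * γ - 1) * w ^ (2 * γ - 2))) / wellCorrection γ w ^ 3
  have hR : ∀ w, 0 < w → HasDerivAt R (wellForce γ w * e w) w := fun w hw => by
    have hB : wellCorrection γ w ≠ 0 := (wellCorrection_pos hγ hγ1 hw).ne'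
    refine (((hasDerivAt_wellPotential hγ0.ne' hw).const_mul _).sub
      ((hasDerivAt_wellForce_div_wellCorrection hw hB).fun_pow 2)).congr_deriv ?_
    simp only [e, Nat.cast_ofNat, Nat.add_one_sub_one, pow_one]
    field_simp
  have he : ∀ w, 0 < w → 0 ≤ e w := fun w hw => div_nonneg
    (mul_nonneg two_pos.le (sub_nonneg.2 (deriv_wellForce_le_wellCorrection_pow hγ hγ1 hw)))
    (pow_pos (wellCorrection_pos hγ hγ1 hw) 3).le
  have hmin : IsMinOn R (Ioi 0) 1 := by
    refine isMinOn_Ioi_of_deriv (hR 1 one_pos).continuousAt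
      (fun t ht => (hR t ht.1).differentiableAt.differentiableWithinAt)
      (fun t ht => (hR t (one_pos.trans ht)).differentiableAt.differentiableWithinAt)
      (fun t ht => ?_) (fun t ht => ?_)
    · rw [(hR t ht.1).deriv]
      exact mul_nonpos_of_nonpos_of_nonneg (wellForce_neg hγ1 ht.1 ht.2).le (he t ht.1)
    · have ht0 : 0 < t := one_pos.trans ht
      rw [(hR t ht0).deriv]
      exact mul_nonneg (wellForce_pos hγ1 ht).le (he t ht0)
  have hR1 : R 1 = 0 := by
    simp only [R, wellPotential, wellForce, Real.one_rpow]
    field_simp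
    ring
  exact sub_nonneg.1 (hR1.symm.trans_le (hmin hw))

theorem abs_wellForce_le (hγ : 1 / 2 ≤ γ) (hγ1 : γ < 1) (hw : 0 < w) :
    |wellForce γ w| ≤ √(2 * (1 - γ)) * wellCorrection γ w * √(wellPotential γ w) := by
  have hB : 0 < wellCorrection γ w := wellCorrection_pos hγ hγ1 hw
  have habs := Real.abs_le_sqrt (sq_wellForce_div_wellCorrection_le hγ hγ1 hw)
  rw [abs_div, abs_of_pos hB, div_le_iff₀ hB, Real.sqrt_mul (by linarith)] at habs
  linarith

end NormalizedWell

section Peak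

/-- The point at which `f_α` is maximal. -/
def peakPoint (γ α : ℝ) : ℝ := (α * γ) ^ (2 - 2 * γ)⁻¹

variable {γ α t w : ℝ}

theorem hasDerivAt_fA (ht : 0 < t) : HasDerivAt (fA γ α) (fA' γ α t) t := by
  refine ((((Real.hasDerivAt_rpow_const (p := 2 * γ) (Or.inl ht.ne')).const_mul α).sub
    (hasDerivAt_pow 2 t)).sub_const 1).congr_deriv ?_
  simp only [fA', Nat.cast_ofNat, Nat.add_one_sub_one, pow_one]
  ring

theorem continuous_fA (hγ : 0 ≤ γ) : Continuous (fA γ α) :=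
  ((continuous_const.mul (Real.continuous_rpow_const (by linarith))).sub
    (continuous_pow 2)).sub continuous_const

theorem continuous_fA' (hγ : 1 / 2 ≤ γ) : Continuous (fA' γ α) :=
  (continuous_const.mul (Real.continuous_rpow_const (by linarith))).sub
    (continuous_const.mul continuous_id)

theorem mul_rpow_inv_rpow_eq_sq {c : ℝ} (hγ : γ < 1) (hc : 0 < c) :
    c * (c ^ (2 - 2 * γ)⁻¹) ^ (2 * γ) = (c ^ (2 - 2 * γ)⁻¹) ^ 2 := by
  have hpow : (c ^ (2 - 2 * γ)⁻¹) ^ (2 - 2 * γ) = c := Real.rpow_inv_rpow hc.le (by linarith)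
  nth_rw 1 [← hpow]
  rw [← Real.rpow_add (Real.rpow_pos_of_pos hc _), sub_add_cancel, Real.rpow_two]

theorem peakPoint_pos (hγ : 0 < γ) (hα : 0 < α) : 0 < peakPoint γ α :=
  Real.rpow_pos_of_pos (mul_pos hα hγ) _

theorem mul_peakPoint_rpow (hγ : 0 < γ) (hγ1 : γ < 1) (hα : 0 < α) :
    α * γ * peakPoint γ α ^ (2 * γ) = peakPoint γ α ^ 2 :=
  mul_rpow_inv_rpow_eq_sq hγ1 (mul_pos hα hγ)

theorem fA_peakPoint (hγ : 0 < γ) (hγ1 : γ < 1) (hα : 0 < α) :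
    fA γ α (peakPoint γ α) = peakPoint γ α ^ 2 * ((1 - γ) / γ) - 1 := by
  rw [fA]
  field_simp
  linear_combination mul_peakPoint_rpow hγ hγ1 hα

theorem fA_peakPoint_mul (hγ : 0 < γ) (hγ1 : γ < 1) (hα : 0 < α) (hw : 0 < w) :
    fA γ α (peakPoint γ α * w) =
      fA γ α (peakPoint γ α) - peakPoint γ α ^ 2 * wellPotential γ w := by
  rw [fA_peakPoint hγ hγ1 hα, fA, wellPotential, Real.mul_rpow (peakPoint_pos hγ hα).le hw.le]
  field_simp
  linear_combination w ^ (2 * γ) * mul_peakPoint_rpow hγ hγ1 hα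

theorem fA'_peakPoint_mul (hγ : 0 < γ) (hγ1 : γ < 1) (hα : 0 < α) (hw : 0 < w) :
    fA' γ α (peakPoint γ α * w) = -(2 * peakPoint γ α * wellForce γ w) := by
  have hm : 0 < peakPoint γ α := peakPoint_pos hγ hα
  rw [fA', wellForce, Real.mul_rpow hm.le hw.le, Real.rpow_sub_one hm.ne']
  field_simp
  linear_combination w ^ (2 * γ - 1) * mul_peakPoint_rpow hγ hγ1 hα

theorem fA'_pos_of_lt_peakPoint (hγ : 0 < γ) (hγ1 : γ < 1) (hα : 0 < α) (ht : 0 < t)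
    (htm : t < peakPoint γ α) : 0 < fA' γ α t := by
  have hm : 0 < peakPoint γ α := peakPoint_pos hγ hα
  have hw : 0 < t / peakPoint γ α := div_pos ht hm
  rw [← mul_div_cancel₀ t hm.ne', fA'_peakPoint_mul hγ hγ1 hα hw]
  exact neg_pos.2 (mul_neg_of_pos_of_neg (by positivity)
    (wellForce_neg hγ1 hw ((div_lt_one hm).2 htm)))

theorem fA'_neg_of_peakPoint_lt (hγ : 0 < γ) (hγ1 : γ < 1) (hα : 0 < α)
    (htm : peakPoint γ α < t) : fA' γ α t < 0 := by
  have hm : 0 < peakPoint γ α := peakPoint_pos hγ hα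
  rw [← mul_div_cancel₀ t hm.ne', fA'_peakPoint_mul hγ hγ1 hα (div_pos (hm.trans htm) hm)]
  exact neg_neg_of_pos (mul_pos (by positivity) (wellForce_pos hγ1 ((one_lt_div hm).2 htm)))

theorem strictMonoOn_fA (hγ : 0 < γ) (hγ1 : γ < 1) (hα : 0 < α) :
    StrictMonoOn (fA γ α) (Icc 0 (peakPoint γ α)) := by
  apply strictMonoOn_of_hasDerivWithinAt_pos (f' := fA' γ α) (convex_Icc _ _)
    (continuous_fA hγ.le).continuousOn <;> rw [interior_Icc]
  · exact fun t ht => (hasDerivAt_fA ht.1).hasDerivWithinAt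
  · exact fun t ht => fA'_pos_of_lt_peakPoint hγ hγ1 hα ht.1 ht.2

theorem strictAntiOn_fA (hγ : 0 < γ) (hγ1 : γ < 1) (hα : 0 < α) :
    StrictAntiOn (fA γ α) (Ici (peakPoint γ α)) := by
  apply strictAntiOn_of_hasDerivWithinAt_neg (f' := fA' γ α) (convex_Ici _)
    (continuous_fA hγ.le).continuousOn <;> rw [interior_Ici]
  · exact fun t ht => (hasDerivAt_fA ((peakPoint_pos hγ hα).trans ht)).hasDerivWithinAt
  · exact fun t ht => fA'_neg_of_peakPoint_lt hγ hγ1 hα ht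

theorem pos_of_threshold_lt (hγ : 0 < γ) (hγ1 : γ < 1)
    (hα : γ ^ (-γ) * (1 - γ) ^ (γ - 1) < α) : 0 < α :=
  (mul_pos (Real.rpow_pos_of_pos hγ _) (Real.rpow_pos_of_pos (sub_pos.2 hγ1) _)).trans hα

theorem fA_peakPoint_pos (hγ : 0 < γ) (hγ1 : γ < 1)
    (hα : γ ^ (-γ) * (1 - γ) ^ (γ - 1) < α) : 0 < fA γ α (peakPoint γ α) := by
  have hδ : 0 < 1 - γ := sub_pos.2 hγ1
  have hα0 : 0 < α := pos_of_threshold_lt hγ hγ1 hα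
  have hrpow : (γ / (1 - γ)) ^ (1 - γ) < α * γ := by
    calc (γ / (1 - γ)) ^ (1 - γ) = γ ^ (-γ) * (1 - γ) ^ (γ - 1) * γ := by
          rw [Real.div_rpow hγ.le hδ.le, ← neg_sub 1 γ, Real.rpow_neg hδ.le,
            show γ ^ (1 - γ) = γ ^ (-γ) * γ by rw [← Real.rpow_add_one hγ.ne', neg_add_eq_sub]]
          ring
      _ < α * γ := by gcongr
  have hsq : peakPoint γ α ^ 2 = (α * γ) ^ (1 - γ)⁻¹ := by
    rw [peakPoint, ← Real.rpow_mul_natCast (mul_pos hα0 hγ).le]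
    congr 1
    field_simp
    norm_num
  have hlt : γ / (1 - γ) < peakPoint γ α ^ 2 := by
    rw [hsq]
    exact (Real.lt_rpow_inv_iff_of_pos (by positivity) (by positivity) hδ).2 hrpow
  rw [fA_peakPoint hγ hγ1 hα0, sub_pos, ← inv_div, ← div_eq_mul_inv]
  exact (one_lt_div (by positivity)).2 hlt

theorem omega_isolates_peakPoint (hγ : 0 < γ) (hγ1 : γ < 1)
    (hα : γ ^ (-γ) * (1 - γ) ^ (γ - 1) < α) :
    omegaMinus γ α ∈ Ioo 0 (peakPoint γ α) ∧ peakPoint γ α < omegaPlus γ α ∧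
      fA γ α (omegaMinus γ α) = 0 ∧ fA γ α (omegaPlus γ α) = 0 := by
  have hα0 : 0 < α := pos_of_threshold_lt hγ hγ1 hα
  have hf0 : fA γ α 0 < 0 := by simp [fA, hγ.ne']
  have hpeak_le : peakPoint γ α ≤ α ^ (2 - 2 * γ)⁻¹ :=
    Real.rpow_le_rpow (by positivity) (mul_le_of_le_one_right hα0.le hγ1.le)
      (inv_nonneg.2 (by linarith))
  have hfar : fA γ α (α ^ (2 - 2 * γ)⁻¹) < 0 := by
    rw [fA, mul_rpow_inv_rpow_eq_sq hγ1 hα0]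
    linarith
  obtain ⟨p, hp, q, hq, hfp, hfq, hset⟩ := exists_setOf_lt_eq_Ioo_of_unimodal
    (continuous_fA hγ.le).continuousOn (strictMonoOn_fA hγ hγ1 hα0) (strictAntiOn_fA hγ hγ1 hα0)
    (peakPoint_pos hγ hα0).le hpeak_le hf0 (fA_peakPoint_pos hγ hγ1 hα) hfar
  have hpq : p < q := hp.2.trans hq.1
  rw [omegaMinus, omegaPlus, hset, csInf_Ioo hpq, csSup_Ioo hpq]
  exact ⟨hp, hq.1, hfp, hfq⟩

theorem abs_fA'_le (hγ : 1 / 2 ≤ γ) (hγ1 : γ < 1) (hα : 0 < α) (ht : 0 < t) :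
    (√(2 * (1 - γ)))⁻¹ * |fA' γ α t| ≤
      (2 - (2 * γ - 1) / (6 * (1 - γ)) / peakPoint γ α * fA' γ α t) *
        √(fA γ α (peakPoint γ α) - fA γ α t) := by
  have hγ0 : 0 < γ := by linarith
  have hm : 0 < peakPoint γ α := peakPoint_pos hγ0 hα
  obtain ⟨w, rfl⟩ : ∃ w, t = peakPoint γ α * w := ⟨t / peakPoint γ α, by field_simp⟩
  have hw : 0 < w := pos_of_mul_pos_right ht hm.le
  have hcorr : 2 - (2 * γ - 1) / (6 * (1 - γ)) / peakPoint γ α *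
      -(2 * peakPoint γ α * wellForce γ w) = 2 * wellCorrection γ w := by
    rw [wellCorrection]
    field_simp
    ring
  rw [fA_peakPoint_mul hγ0 hγ1 hα hw, fA'_peakPoint_mul hγ0 hγ1 hα hw, hcorr, sub_sub_cancel,
    Real.sqrt_mul (sq_nonneg _), Real.sqrt_sq hm.le, abs_neg, abs_mul, abs_of_pos (by positivity),
    inv_mul_le_iff₀ (Real.sqrt_pos.2 (by linarith))]
  calc 2 * peakPoint γ α * |wellForce γ w|
      ≤ 2 * peakPoint γ α *
          (√(2 * (1 - γ)) * wellCorrection γ w * √(wellPotential γ w)) := by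
        gcongr
        exact abs_wellForce_le hγ hγ1 hw
    _ = √(2 * (1 - γ)) * (2 * wellCorrection γ w *
          (peakPoint γ α * √(wellPotential γ w))) := by ring

end Peak

theorem I0_lower_bound_general {γ α : ℝ} (hγ : 1 / 2 ≤ γ) (hγ1 : γ < 1)
    (hα : γ ^ (-γ) * (1 - γ) ^ (γ - 1) < α) : π / √(2 * (1 - γ)) ≤ I0 γ α := by
  have hγ0 : 0 < γ := by linarith
  have hα0 : 0 < α := pos_of_threshold_lt hγ0 hγ1 hα
  obtain ⟨hp, hmq, hfp, hfq⟩ := omega_isolates_peakPoint hγ0 hγ1 hα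
  rw [div_eq_inv_mul]
  exact mul_pi_le_integral_one_div_sqrt hp.2 hmq (fun t ht => hasDerivAt_fA (hp.1.trans_le ht.1))
    (continuous_fA' hγ).continuousOn hfp hfq
    (fun t ht => fA'_pos_of_lt_peakPoint hγ0 hγ1 hα0 (hp.1.trans_le ht.1) ht.2)
    (fun t ht => fA'_neg_of_peakPoint_lt hγ0 hγ1 hα0 ht.1)
    (fun t ht => abs_fA'_le hγ hγ1 hα0 (hp.1.trans ht.1))

theorem one_half_le_one_sub_two_div_pi_sq : 1 / 2 ≤ 1 - 2 / π ^ 2 := by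
  have hπ : 2 ^ 2 ≤ π ^ 2 := pow_le_pow_left₀ two_pos.le Real.two_le_pi 2
  have : 2 / π ^ 2 ≤ 2 / 2 ^ 2 := by gcongr
  linarith

theorem pi_div_sqrt_two_mul_two_div_pi_sq : π / √(2 * (2 / π ^ 2)) = (2 / π ^ 2)⁻¹ := by
  have hsq : 2 * (2 / π ^ 2) = (2 / π) ^ 2 := by ring
  rw [hsq, Real.sqrt_sq (by positivity)]
  field_simp

/-- For `γ = 1 − 2π⁻²`, the function `I₀` cannot take values smaller than
`(1−γ)⁻¹`. -/
theorem I0_lower_bound (γ : ℝ) (hγ : γ = 1 - 2 / π ^ 2) :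
    ∀ α : ℝ, γ ^ (-γ) * (1 - γ) ^ (γ - 1) < α → (1 - γ)⁻¹ ≤ I0 γ α := by
  subst hγ
  simpa only [sub_sub_cancel, pi_div_sqrt_two_mul_two_div_pi_sq] using fun α =>
    I0_lower_bound_general (α := α) one_half_le_one_sub_two_div_pi_sq
      (sub_lt_self 1 (by positivity))
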